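/- arXiv:math/0005042 — 11 statements merged into one kernel-verified Lean document; each statement's English description precedes it below -/
import Mathlib

section
/- If the pair (α, ρ) satisfies conditions (5.3) and (5.4), then the bracket (5.5) makes the vector space h × g into a Lie algebra over 𝕜 (it is bilinear, alternating, and satisfies the Jacobi identity). -/
/-!
Bilinearity and the alternating property are read off the formula for the bracket. For the
Jacobi identity, the `g`-component of the cyclic sum is the Jacobi identity of `g`. In the
`h`-component, the terms cubic in `h` cancel by the Jacobi identity of `h`; the terms
quadratic in `h` cancel because each `α X` is a derivation; the terms linear in `h` cancel
because the curvature of `α` is the inner derivation by `ρ`; and the terms free of `h` form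
exactly the cocycle condition on `ρ`.
-/

/-- The bracket (5.5) on `h × g` determined by `α : g → Der(h)` and an
alternating bilinear `ρ : g × g → h`:
`⁅(H₁,X₁),(H₂,X₂)⁆ = (⁅H₁,H₂⁆ + α X₁ H₂ - α X₂ H₁ + ρ X₁ X₂, ⁅X₁,X₂⁆)`. -/
def extBracket {𝕜 : Type*} [Field 𝕜] {h g : Type*} [LieRing h] [LieAlgebra 𝕜 h]
    [LieRing g] [LieAlgebra 𝕜 g] (α : g →ₗ[𝕜] LieDerivation 𝕜 h h)
    (ρ : g →ₗ[𝕜] g →ₗ[𝕜] h) (p q : h × g) : h × g :=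
  (⁅p.1, q.1⁆ + α p.2 q.1 - α q.2 p.1 + ρ p.2 q.2, ⁅p.2, q.2⁆)

theorem lie_lie_cyclic {L : Type*} [LieRing L] (A B C : L) :
    ⁅⁅A, B⁆, C⁆ + ⁅⁅B, C⁆, A⁆ + ⁅⁅C, A⁆, B⁆ = 0 := by
  rw [← lie_skew ⁅A, B⁆ C, ← lie_skew ⁅B, C⁆ A, ← lie_skew ⁅C, A⁆ B, ← neg_add, ← neg_add,
    neg_eq_zero, ← lie_jacobi A B C]
  abel

/-- If `α : g → Der(h)` is `𝕜`-linear, `ρ : g × g → h` is alternating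
`𝕜`-bilinear, and the pair `(α, ρ)` satisfies conditions (5.3) and (5.4), then the
bracket (5.5) makes the vector space `h × g` into a Lie algebra over `𝕜`: it is
`𝕜`-bilinear, alternating, and satisfies the Jacobi identity. -/
theorem statement3 {𝕜 : Type*} [Field 𝕜] {h g : Type*} [LieRing h] [LieAlgebra 𝕜 h]
    [LieRing g] [LieAlgebra 𝕜 g] (α : g →ₗ[𝕜] LieDerivation 𝕜 h h)
    (ρ : g →ₗ[𝕜] g →ₗ[𝕜] h) (halt : ∀ X : g, ρ X X = 0)
    (h53 : ∀ X Y : g, ⁅α X, α Y⁆ - α ⁅X, Y⁆ = LieDerivation.ad 𝕜 h (ρ X Y))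
    (h54 : ∀ X Y Z : g,
      α X (ρ Y Z) + α Y (ρ Z X) + α Z (ρ X Y)
        - ρ ⁅X, Y⁆ Z - ρ ⁅Y, Z⁆ X - ρ ⁅Z, X⁆ Y = 0) :
    (∀ p q r : h × g, extBracket α ρ (p + q) r
        = extBracket α ρ p r + extBracket α ρ q r) ∧
    (∀ p q r : h × g, extBracket α ρ p (q + r)
        = extBracket α ρ p q + extBracket α ρ p r) ∧
    (∀ (c : 𝕜) (p q : h × g), extBracket α ρ (c • p) q = c • extBracket α ρ p q) ∧
    (∀ (c : 𝕜) (p q : h × g), extBracket α ρ p (c • q) = c • extBracket α ρ p q) ∧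
    (∀ p : h × g, extBracket α ρ p p = 0) ∧
    (∀ p q r : h × g,
      extBracket α ρ (extBracket α ρ p q) r + extBracket α ρ (extBracket α ρ q r) p
        + extBracket α ρ (extBracket α ρ r p) q = 0) := by
  refine ⟨?_, ?_, ?_, ?_, ?_, ?_⟩
  · rintro ⟨A, X⟩ ⟨B, Y⟩ ⟨C, Z⟩
    ext
    · simp [extBracket]
      abel
    · simp [extBracket]
  · rintro ⟨A, X⟩ ⟨B, Y⟩ ⟨C, Z⟩
    ext
    · simp [extBracket]
      abel
    · simp [extBracket]
  · rintro c ⟨A, X⟩ ⟨B, Y⟩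
    simp [extBracket, smul_add, smul_sub]
  · rintro c ⟨A, X⟩ ⟨B, Y⟩
    simp [extBracket, smul_add, smul_sub]
  · rintro ⟨A, X⟩
    simp [extBracket, halt]
  · rintro ⟨A, X⟩ ⟨B, Y⟩ ⟨C, Z⟩
    -- The curvature condition on `α`, evaluated at an element of `h`.
    have curv : ∀ (X Y : g) (K : h),
        ⁅ρ X Y, K⁆ = α X (α Y K) - α Y (α X K) - α ⁅X, Y⁆ K := by
      intro X Y K
      have := congrArg (fun D : LieDerivation 𝕜 h h => D K) (h53 X Y)
      simpa [LieDerivation.commutator_apply] using this.symm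
    -- The Leibniz rule, with every term of the form `⁅α Z _, _⁆`.
    have leib : ∀ (Z : g) (K L : h), α Z ⁅K, L⁆ = ⁅α Z K, L⁆ - ⁅α Z L, K⁆ := by
      intro Z K L
      rw [LieDerivation.apply_lie_eq_sub, ← lie_skew (α Z L) K, ← lie_skew (α Z K) L]
      abel
    have jacobi := lie_lie_cyclic A B C
    ext
    · simp only [extBracket, Prod.fst_add, Prod.fst_zero, add_lie, sub_lie, map_add, map_sub,
        curv, leib]
      have e := h54 X Y Z
      rw [← sub_eq_zero.mpr (jacobi.trans e.symm)]
      abel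
    · exact lie_lie_cyclic X Y Z
end

section
/- Given a datum (α, ρ) satisfying (5.3) and (5.4) and a 𝕜-linear map b : g → h, define α'_X = α_X + ad_{b(X)} and ρ'(X,Y) = ρ(X,Y) + α_X(b(Y)) − α_Y(b(X)) − b(⁅X,Y⁆) + ⁅b(X), b(Y)⁆. Then (α', ρ') also satisfies (5.3) and (5.4), and the map ψ : e(α,ρ) → e(α',ρ'), ψ(H, X) = (H − b(X), X), is an isomorphism of Lie algebras with ψ(H,0) = (H,0) and pr₂ ∘ ψ = pr₂. -/
/-!
The passage from `(α, ρ)` to `(α', ρ')` is the change of the linear section `X ↦ (0, X)` of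
`e(α, ρ) → g` to `X ↦ (b X, X)`, and `ψ` is the resulting change of coordinates, with inverse
`(H, X) ↦ (H + b X, X)`. The two conditions on `(α', ρ')` are verified by expansion: they reduce to
the same conditions on `(α, ρ)`, the Leibniz rule for `α X`, and the Jacobi identities in `h` and `g`.
-/

/-- The bracket (5.5) on `e(α,ρ) = h × g` for (possibly unbundled) maps `α`, `ρ`:
`⁅(H₁,X₁),(H₂,X₂)⁆ = (⁅H₁,H₂⁆ + α X₁ H₂ - α X₂ H₁ + ρ X₁ X₂, ⁅X₁,X₂⁆)`. -/
def extBracketF {𝕜 : Type*} [Field 𝕜] {h g : Type*} [LieRing h] [LieAlgebra 𝕜 h]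
    [LieRing g] [LieAlgebra 𝕜 g] (α : g → LieDerivation 𝕜 h h)
    (ρ : g → g → h) (p q : h × g) : h × g :=
  (⁅p.1, q.1⁆ + α p.2 q.1 - α q.2 p.1 + ρ p.2 q.2, ⁅p.2, q.2⁆)

/-- Given a datum `(α, ρ)` satisfying (5.3) and (5.4) and a `𝕜`-linear
map `b : g → h`, define `α'_X = α_X + ad_(b X)` and
`ρ' X Y = ρ X Y + α X (b Y) - α Y (b X) - b ⁅X,Y⁆ + ⁅b X, b Y⁆`.
Then `(α', ρ')` also satisfies (5.3) and (5.4), and the map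
`ψ : e(α,ρ) → e(α',ρ')`, `ψ (H, X) = (H - b X, X)`, is an isomorphism of Lie
algebras with `ψ (H, 0) = (H, 0)` and `pr₂ ∘ ψ = pr₂`. -/
theorem statement6 {𝕜 : Type*} [Field 𝕜] {h g : Type*} [LieRing h] [LieAlgebra 𝕜 h]
    [LieRing g] [LieAlgebra 𝕜 g] (α : g →ₗ[𝕜] LieDerivation 𝕜 h h)
    (ρ : g →ₗ[𝕜] g →ₗ[𝕜] h) (halt : ∀ X : g, ρ X X = 0)
    (h53 : ∀ X Y : g, ⁅α X, α Y⁆ - α ⁅X, Y⁆ = LieDerivation.ad 𝕜 h (ρ X Y))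
    (h54 : ∀ X Y Z : g,
      α X (ρ Y Z) + α Y (ρ Z X) + α Z (ρ X Y)
        - ρ ⁅X, Y⁆ Z - ρ ⁅Y, Z⁆ X - ρ ⁅Z, X⁆ Y = 0)
    (b : g →ₗ[𝕜] h) :
    let α' : g → LieDerivation 𝕜 h h := fun X => α X + LieDerivation.ad 𝕜 h (b X)
    let ρ' : g → g → h := fun X Y =>
      ρ X Y + α X (b Y) - α Y (b X) - b ⁅X, Y⁆ + ⁅b X, b Y⁆
    (∀ X Y : g, ⁅α' X, α' Y⁆ - α' ⁅X, Y⁆ = LieDerivation.ad 𝕜 h (ρ' X Y)) ∧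
    (∀ X Y Z : g,
      α' X (ρ' Y Z) + α' Y (ρ' Z X) + α' Z (ρ' X Y)
        - ρ' ⁅X, Y⁆ Z - ρ' ⁅Y, Z⁆ X - ρ' ⁅Z, X⁆ Y = 0) ∧
    (∃ ψ : (h × g) ≃ₗ[𝕜] (h × g),
      (∀ (H : h) (X : g), ψ (H, X) = (H - b X, X)) ∧
      (∀ p q : h × g,
        ψ (extBracketF (fun X => α X) (fun X Y => ρ X Y) p q)
          = extBracketF α' ρ' (ψ p) (ψ q)) ∧
      (∀ H : h, ψ (H, 0) = (H, 0)) ∧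
      (∀ p : h × g, (ψ p).2 = p.2)) := by
  intro α' ρ'
  -- The curvature identity for `α`, evaluated at an element of `h`.
  have curv : ∀ (X Y : g) (H : h),
      α X (α Y H) - α Y (α X H) - α ⁅X, Y⁆ H = ⁅ρ X Y, H⁆ := fun X Y H => by
    simpa using DFunLike.congr_fun (h53 X Y) H
  refine ⟨fun X Y => ?_, fun X Y Z => ?_, ?_⟩
  · ext H
    -- Beyond `curv` and the Leibniz rule, only the Jacobi identity for `⁅⁅b X, b Y⁆, H⁆` is needed.
    have hc := curv X Y H
    have hJ := lie_lie (b X) (b Y) H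
    simp only [α', ρ', LieDerivation.commutator_apply, LieDerivation.sub_apply,
      LieDerivation.add_apply, LieDerivation.ad_apply_apply, map_add, map_sub]
    simp only [LieDerivation.apply_lie_eq_add]
    linear_combination (norm := module) hc - hJ
  · have hb : b ⁅⁅X, Y⁆, Z⁆ + b ⁅⁅Y, Z⁆, X⁆ + b ⁅⁅Z, X⁆, Y⁆ = 0 := by
      have e := congrArg b (lie_jacobi X Y Z)
      simp only [map_add, map_zero] at e
      rw [← lie_skew ⁅X, Y⁆ Z, ← lie_skew ⁅Y, Z⁆ X, ← lie_skew ⁅Z, X⁆ Y, map_neg, map_neg, map_neg]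
      linear_combination (norm := module) -e
    have hJ := lie_jacobi (b X) (b Y) (b Z)
    have h0 := h54 X Y Z
    -- The curvature terms `⁅ρ X Y, b Z⁆` cancel the terms `⁅b Z, ρ X Y⁆` of `ad (b Z) (ρ' X Y)`.
    -- The Leibniz terms of `α X ⁅b Y, b Z⁆` cancel against those of `ad (b Y) (ρ' Z X)` and
    -- `ad (b Z) (ρ' X Y)`, and `⁅b X, b ⁅Y, Z⁆⁆` cancels `⁅b ⁅Y, Z⁆, b X⁆`.
    have c₁ := curv X Y (b Z)
    have c₂ := curv Y Z (b X)
    have c₃ := curv Z X (b Y)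
    simp only [α', ρ', LieDerivation.add_apply, LieDerivation.ad_apply_apply, map_add, map_sub]
    simp only [LieDerivation.apply_lie_eq_add]
    rw [← lie_skew (ρ X Y) (b Z)] at c₁
    rw [← lie_skew (ρ Y Z) (b X)] at c₂
    rw [← lie_skew (ρ Z X) (b Y)] at c₃
    rw [← lie_skew (b ⁅X, Y⁆) (b Z), ← lie_skew (b ⁅Y, Z⁆) (b X),
      ← lie_skew (b ⁅Z, X⁆) (b Y), ← lie_skew (α X (b Y)) (b Z),
      ← lie_skew (α Y (b Z)) (b X), ← lie_skew (α Z (b X)) (b Y)]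
    linear_combination (norm := module) h0 + c₁ + c₂ + c₃ + hb + hJ
  · refine ⟨{ toFun := fun p => (p.1 - b p.2, p.2)
              invFun := fun p => (p.1 + b p.2, p.2)
              map_add' := fun p q => ?_
              map_smul' := fun c p => ?_
              left_inv := fun p => by simp
              right_inv := fun p => by simp }, fun H X => rfl, fun p q => ?_,
            fun H => by simp, fun p => rfl⟩
    · ext <;> simp; abel
    · ext <;> simp [smul_sub]
    · refine Prod.ext ?_ rfl
      simp only [extBracketF, α', ρ', LinearEquiv.coe_mk, LinearMap.coe_mk, AddHom.coe_mk,
        LieDerivation.add_apply, LieDerivation.ad_apply_apply, map_sub, lie_sub, sub_lie]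
      rw [← lie_skew (b q.2) p.1, ← lie_skew (b q.2) (b p.2)]
      abel
end

section
/- Suppose the Lie algebra h has trivial center and α : g → Der(h) is a 𝕜-linear map such that for all X, Y ∈ g the derivation ⁅α_X, α_Y⁆ − α_{⁅X,Y⁆} is inner (lies in the range of ad : h → Der(h)). Then there is a unique alternating 𝕜-bilinear map ρ : g × g → h with ad_{ρ(X,Y)} = ⁅α_X, α_Y⁆ − α_{⁅X,Y⁆} for all X, Y ∈ g, and this ρ automatically satisfies condition (5.4): α_X(ρ(Y,Z)) + α_Y(ρ(Z,X)) + α_Z(ρ(X,Y)) − ρ(⁅X,Y⁆,Z) − ρ(⁅Y,Z⁆,X) − ρ(⁅Z,X⁆,Y) = 0 for all X, Y, Z ∈ g. -/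
/-!
Trivial center means that `ad : h → Der(h)` is injective, so every identity in `h` can be checked
after applying `ad`. The values `ρ X Y` are therefore determined by the curvature
`⁅α X, α Y⁆ - α ⁅X, Y⁆`, and inherit from it bilinearity and the alternating property. Since
`ad (D H) = ⁅D, ad H⁆` for a derivation `D`, applying `ad` to the left side of the cocycle
condition turns it into the Bianchi identity for this curvature, which follows from the Jacobi
identities in `Der(h)` and in `g`.
-/

/-- Suppose the Lie algebra `h` has trivial center and
`α : g → Der(h)` is a `𝕜`-linear map such that for all `X, Y ∈ g` the derivation
`⁅α X, α Y⁆ - α ⁅X,Y⁆` is inner.  Then there is a unique alternating `𝕜`-bilinear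
map `ρ : g × g → h` with `ad_(ρ X Y) = ⁅α X, α Y⁆ - α ⁅X,Y⁆` for all `X, Y`, and
this `ρ` automatically satisfies condition (5.4). -/
theorem statement8 {𝕜 : Type*} [Field 𝕜] {h g : Type*} [LieRing h] [LieAlgebra 𝕜 h]
    [LieRing g] [LieAlgebra 𝕜 g]
    (hZ : ∀ H : h, (∀ K : h, ⁅H, K⁆ = 0) → H = 0)
    (α : g →ₗ[𝕜] LieDerivation 𝕜 h h)
    (hinner : ∀ X Y : g, ∃ H : h, ⁅α X, α Y⁆ - α ⁅X, Y⁆ = LieDerivation.ad 𝕜 h H) :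
    (∃! ρ : g →ₗ[𝕜] g →ₗ[𝕜] h,
      (∀ X : g, ρ X X = 0) ∧
      (∀ X Y : g, LieDerivation.ad 𝕜 h (ρ X Y) = ⁅α X, α Y⁆ - α ⁅X, Y⁆)) ∧
    (∀ ρ : g →ₗ[𝕜] g →ₗ[𝕜] h, (∀ X : g, ρ X X = 0) →
      (∀ X Y : g, LieDerivation.ad 𝕜 h (ρ X Y) = ⁅α X, α Y⁆ - α ⁅X, Y⁆) →
      ∀ X Y Z : g,
        α X (ρ Y Z) + α Y (ρ Z X) + α Z (ρ X Y)
          - ρ ⁅X, Y⁆ Z - ρ ⁅Y, Z⁆ X - ρ ⁅Z, X⁆ Y = 0) := by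
  have hinj : Function.Injective (LieDerivation.ad 𝕜 h) := by
    rw [injective_iff_map_eq_zero]
    intro H hH
    refine hZ H fun K => ?_
    simpa using LieDerivation.congr_fun hH K
  constructor
  · choose r hr using hinner
    refine ⟨LinearMap.mk₂ 𝕜 r ?_ ?_ ?_ ?_, ⟨?_, ?_⟩, ?_⟩
    · intro X X' Y
      apply hinj
      simp only [map_add, ← hr, add_lie]
      abel
    · intro c X Y
      apply hinj
      simp only [map_smul, ← hr, smul_lie, smul_sub]
    · intro X Y Y'
      apply hinj
      simp only [map_add, ← hr, lie_add]
      abel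
    · intro c X Y
      apply hinj
      have hsmul : ⁅α X, c • α Y⁆ = c • ⁅α X, α Y⁆ := by
        ext K
        simp [smul_sub]
      simp only [map_smul, ← hr, lie_smul, hsmul, smul_sub]
    · intro X
      apply hinj
      simp [← hr]
    · intro X Y
      exact (hr X Y).symm
    · rintro ρ ⟨-, hρ⟩
      ext X Y
      apply hinj
      rw [hρ, hr, LinearMap.mk₂_apply]
  · intro ρ _ hρ X Y Z
    have had (D : LieDerivation 𝕜 h h) (H : h) :
        LieDerivation.ad 𝕜 h (D H) = ⁅D, LieDerivation.ad 𝕜 h H⁆ := by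
      ext K
      simp
    apply hinj
    simp only [map_add, map_sub, map_zero, had, hρ, lie_sub]
    have jacobi_der := lie_jacobi (α X) (α Y) (α Z)
    have jacobi_g : α ⁅⁅X, Y⁆, Z⁆ + α ⁅⁅Y, Z⁆, X⁆ + α ⁅⁅Z, X⁆, Y⁆ = 0 := by
      rw [← map_add, ← map_add, ← lie_skew ⁅X, Y⁆, ← lie_skew ⁅Y, Z⁆, ← lie_skew ⁅Z, X⁆]
      have := lie_jacobi X Y Z
      rw [show -⁅Z, ⁅X, Y⁆⁆ + -⁅X, ⁅Y, Z⁆⁆ + -⁅Y, ⁅Z, X⁆⁆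
        = -(⁅X, ⁅Y, Z⁆⁆ + ⁅Y, ⁅Z, X⁆⁆ + ⁅Z, ⁅X, Y⁆⁆) by abel, this, neg_zero, map_zero]
    rw [← lie_skew (α ⁅X, Y⁆), ← lie_skew (α ⁅Y, Z⁆), ← lie_skew (α ⁅Z, X⁆)]
    -- The mixed terms `⁅α X, α ⁅Y, Z⁆⁆` cancel, leaving the two Jacobi sums.
    linear_combination (norm := module) jacobi_der + jacobi_g
end

section
/- Let h be a Lie ideal of a Lie algebra e over 𝕜 such that h has trivial center and every 𝕜-linear derivation of h is inner. Then there is an isomorphism of Lie algebras φ : e ≅ h × (e/h) such that φ(H) = (H, 0) for every H ∈ h and the second component of φ is the quotient projection e → e/h; in particular e is isomorphic, as an extension of e/h by h, to the direct product h × (e/h). -/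
/-!
Each `x : e` acts on the ideal `I` by the derivation `K ↦ ⁅x, K⁆`. By hypothesis it equals `ad (p x)`
for some `p x : I`, and `p x` is unique because `I` has trivial center. Uniqueness forces
`p : e → I` to be linear, to preserve brackets, and to restrict to the identity on `I`. Hence
`x ↦ (p x, x mod I)` is a Lie algebra homomorphism; it is bijective because `p` is a retraction of
`e` onto `I`, the kernel of the projection.
-/

/-- The direct-product Lie ring structure on `L × M` (componentwise bracket). -/
instance prodLieRing {L M : Type*} [LieRing L] [LieRing M] : LieRing (L × M) where
  bracket p q := (⁅p.1, q.1⁆, ⁅p.2, q.2⁆)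
  add_lie x y z := Prod.ext (add_lie x.1 y.1 z.1) (add_lie x.2 y.2 z.2)
  lie_add x y z := Prod.ext (lie_add x.1 y.1 z.1) (lie_add x.2 y.2 z.2)
  lie_self x := Prod.ext (lie_self x.1) (lie_self x.2)
  leibniz_lie x y z := Prod.ext (leibniz_lie x.1 y.1 z.1) (leibniz_lie x.2 y.2 z.2)

/-- The direct-product Lie algebra structure on `L × M`. -/
instance prodLieAlgebra {𝕜 L M : Type*} [CommRing 𝕜] [LieRing L] [LieAlgebra 𝕜 L]
    [LieRing M] [LieAlgebra 𝕜 M] : LieAlgebra 𝕜 (L × M) where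
  lie_smul t x y := Prod.ext (lie_smul t x.1 y.1) (lie_smul t x.2 y.2)

/-- The restriction to a Lie ideal `I` of the inner derivation `ad x`, for `x` in the ambient Lie
algebra. -/
def idealDerivation {𝕜 : Type*} [Field 𝕜] {e : Type*} [LieRing e] [LieAlgebra 𝕜 e]
    (I : LieIdeal 𝕜 e) (x : e) : LieDerivation 𝕜 I I where
  toLinearMap := LieModule.toEnd 𝕜 e I x
  leibniz' a b := by
    apply Subtype.ext
    change ⁅x, ⁅(a : e), (b : e)⁆⁆ = ⁅(a : e), ⁅x, (b : e)⁆⁆ - ⁅(b : e), ⁅x, (a : e)⁆⁆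
    rw [leibniz_lie, ← lie_skew (b : e), sub_neg_eq_add, add_comm]

/-- Let `I` be a Lie ideal of a Lie algebra `e` over `𝕜` such that `I`
has trivial center and every `𝕜`-linear derivation of `I` is inner.  Then there is
an isomorphism of Lie algebras `φ : e ≅ I × (e ⧸ I)` (for the componentwise Lie
algebra structure on the product) such that `φ H = (H, 0)` for every `H ∈ I` and the
second component of `φ` is the quotient projection `e → e ⧸ I`; in particular `e`
is isomorphic, as an extension of `e ⧸ I` by `I`, to the direct product. -/
theorem statement9 {𝕜 : Type*} [Field 𝕜] {e : Type*} [LieRing e] [LieAlgebra 𝕜 e]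
    (I : LieIdeal 𝕜 e)
    (hZ : ∀ H : I, (∀ K : I, ⁅H, K⁆ = 0) → H = 0)
    (hder : ∀ D : LieDerivation 𝕜 I I, ∃ H : I, D = LieDerivation.ad 𝕜 I H) :
    ∃ φ : e ≃ₗ[𝕜] I × (e ⧸ I),
      (∀ x y : e, φ ⁅x, y⁆ = ⁅φ x, φ y⁆) ∧
      (∀ H : I, φ (H : e) = (H, 0)) ∧
      (∀ x : e, (φ x).2 = LieSubmodule.Quotient.mk' I x) := by
  have hp : ∀ x : e, ∃ H : I, ∀ K : I, ⁅x, K⁆ = ⁅H, K⁆ := fun x => by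
    obtain ⟨H, hH⟩ := hder (idealDerivation I x)
    exact ⟨H, fun K =>
      (DFunLike.congr_fun hH K).trans (LieDerivation.ad_apply_apply 𝕜 I H K)⟩
  choose p hp using hp
  have huniq : ∀ (x : e) (A : I), (∀ K : I, ⁅x, K⁆ = ⁅A, K⁆) → p x = A := fun x A h => by
    rw [← sub_eq_zero]
    refine hZ _ fun K => ?_
    rw [sub_lie, ← hp, h, sub_self]
  have hadd : ∀ x y, p (x + y) = p x + p y := fun x y =>
    huniq _ _ fun K => by rw [add_lie, add_lie, hp, hp]
  have hsmul : ∀ (c : 𝕜) x, p (c • x) = c • p x := fun c x =>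
    huniq _ _ fun K => by rw [smul_lie, smul_lie, hp]
  have hlie : ∀ x y, p ⁅x, y⁆ = ⁅p x, p y⁆ := fun x y =>
    huniq _ _ fun K => by rw [lie_lie, lie_lie, hp y, hp x, hp x, hp y]
  have hid : ∀ H : I, p H = H := fun H => huniq _ _ fun K => rfl
  let P : e →ₗ[𝕜] I := { toFun := p, map_add' := hadd, map_smul' := hsmul }
  let f : e →ₗ[𝕜] I × (e ⧸ I) :=
    P.prod (LieSubmodule.Quotient.mk' I : e →ₗ[𝕜] e ⧸ I)
  have hf : ∀ x, f x = (p x, LieSubmodule.Quotient.mk' I x) := fun _ => rfl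
  have hmk : ∀ x : e, LieSubmodule.Quotient.mk' I x = 0 ↔ x ∈ I := fun x =>
    LieSubmodule.Quotient.mk_eq_zero I
  have hI : ∀ H : I, f H = (H, 0) := fun H => by
    rw [hf, hid, (hmk _).2 H.2]
  have hinj : Function.Injective f := by
    refine (injective_iff_map_eq_zero f).2 fun x hx => ?_
    rw [hf, Prod.mk_eq_zero, hmk] at hx
    obtain ⟨hpx, hxI⟩ := hx
    exact congrArg Subtype.val ((hid ⟨x, hxI⟩).symm.trans hpx)
  have hsurj : Function.Surjective f := by
    rintro ⟨A, q⟩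
    obtain ⟨y, rfl⟩ := LieSubmodule.Quotient.surjective_mk' I q
    -- Translating `y` by an element of `I` corrects the first component only.
    refine ⟨y + ((A - p y : I) : e), ?_⟩
    rw [map_add, hI, hf]
    simp
  refine ⟨LinearEquiv.ofBijective f ⟨hinj, hsurj⟩, fun x y => ?_, hI, fun _ => rfl⟩
  change f ⁅x, y⁆ = ⁅f x, f y⁆
  exact Prod.ext (hlie x y) rfl
end

section
/- Suppose α : g → Der(h) is 𝕜-linear and ρ : g × g → h is alternating bilinear with ad_{ρ(X,Y)} = ⁅α_X, α_Y⁆ − α_{⁅X,Y⁆} for all X, Y ∈ g. Define λ(X,Y,Z) = α_X(ρ(Y,Z)) + α_Y(ρ(Z,X)) + α_Z(ρ(X,Y)) − ρ(⁅X,Y⁆,Z) − ρ(⁅Y,Z⁆,X) − ρ(⁅Z,X⁆,Y). Then λ(X,Y,Z) lies in the center Z(h) for all X, Y, Z ∈ g. -/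
/-- Suppose `α : g → Der(h)` is `𝕜`-linear and `ρ : g × g → h` is
alternating bilinear with `ad_(ρ X Y) = ⁅α X, α Y⁆ - α ⁅X,Y⁆` for all `X, Y ∈ g`.
Define `λ X Y Z = α X (ρ Y Z) + α Y (ρ Z X) + α Z (ρ X Y)
- ρ ⁅X,Y⁆ Z - ρ ⁅Y,Z⁆ X - ρ ⁅Z,X⁆ Y`.  Then `λ X Y Z` lies in the center `Z(h)`
for all `X, Y, Z ∈ g`. -/
theorem statement10 {𝕜 : Type*} [Field 𝕜] {h g : Type*} [LieRing h] [LieAlgebra 𝕜 h]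
    [LieRing g] [LieAlgebra 𝕜 g] (α : g →ₗ[𝕜] LieDerivation 𝕜 h h)
    (ρ : g →ₗ[𝕜] g →ₗ[𝕜] h) (halt : ∀ X : g, ρ X X = 0)
    (h53 : ∀ X Y : g, LieDerivation.ad 𝕜 h (ρ X Y) = ⁅α X, α Y⁆ - α ⁅X, Y⁆) :
    ∀ X Y Z : g,
      α X (ρ Y Z) + α Y (ρ Z X) + α Z (ρ X Y)
          - ρ ⁅X, Y⁆ Z - ρ ⁅Y, Z⁆ X - ρ ⁅Z, X⁆ Y
        ∈ LieAlgebra.center 𝕜 h := by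
  intro X Y Z
  -- The center is the kernel of `ad`, and `ad (D H) = ⁅D, ad H⁆` for a derivation `D`; so `ad` of
  -- the element becomes an expression in the `α`'s, in which the mixed brackets
  -- `⁅α X, α ⁅Y, Z⁆⁆` cancel and the rest vanishes by Jacobi in `Der(h)` and in `g`.
  rw [← LieDerivation.ad_ker_eq_center, LieHom.mem_ker]
  have jacobi_der := lie_jacobi (α X) (α Y) (α Z)
  have jacobi_g : α ⁅⁅X, Y⁆, Z⁆ + α ⁅⁅Y, Z⁆, X⁆ + α ⁅⁅Z, X⁆, Y⁆ = 0 := by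
    rw [← map_add, ← map_add, ← lie_skew ⁅X, Y⁆ Z, ← lie_skew ⁅Y, Z⁆ X, ← lie_skew ⁅Z, X⁆ Y,
      ← neg_add, ← neg_add, add_assoc, add_comm, lie_jacobi X Y Z, neg_zero, map_zero]
  simp only [map_add, map_sub, ← LieDerivation.lie_der_ad_eq_ad_der, h53, lie_sub]
  rw [← lie_skew (α ⁅X, Y⁆) (α Z), ← lie_skew (α ⁅Y, Z⁆) (α X), ← lie_skew (α ⁅Z, X⁆) (α Y)]
  linear_combination (norm := abel) jacobi_der + jacobi_g
end

section
/- Suppose α : g → Der(h) is 𝕜-linear and ρ : g × g → h is alternating bilinear with ad_{ρ(X,Y)} = ⁅α_X, α_Y⁆ − α_{⁅X,Y⁆} for all X, Y ∈ g, and let λ(X,Y,Z) = α_X(ρ(Y,Z)) + α_Y(ρ(Z,X)) + α_Z(ρ(X,Y)) − ρ(⁅X,Y⁆,Z) − ρ(⁅Y,Z⁆,X) − ρ(⁅Z,X⁆,Y). Then λ is a 3-cocycle: for all X₀, X₁, X₂, X₃ ∈ g, α_{X₀}(λ(X₁,X₂,X₃)) − α_{X₁}(λ(X₀,X₂,X₃))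 + α_{X₂}(λ(X₀,X₁,X₃)) − α_{X₃}(λ(X₀,X₁,X₂)) − λ(⁅X₀,X₁⁆,X₂,X₃) + λ(⁅X₀,X₂⁆,X₁,X₃) − λ(⁅X₀,X₃⁆,X₁,X₂) − λ(⁅X₁,X₂⁆,X₀,X₃) + λ(⁅X₁,X₃⁆,X₀,X₂) − λ(⁅X₂,X₃⁆,X₀,X₁) = 0. -/
/-!
In the expanded coboundary of `λ`, the terms `α_X (α_Y (ρ(Z, W)))` together with
`α_⁅X,Y⁆ (ρ(Z, W))` combine, by the curvature equation, into `⁅ρ(X, Y), ρ(Z, W)⁆`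
(`action_lie`); summed over the six pairs `{X, Y}`, these cancel in complementary pairs by
antisymmetry of the bracket of `h`. The terms `α_X (ρ(⁅Y, Z⁆, W))` and `ρ(⁅X, Y⁆, ⁅Z, W⁆)` cancel since
`ρ` is alternating, and the terms `ρ(⁅⁅X, Y⁆, Z⁆, W)` by the Jacobi identity in `g` (`rho_jacobi`).
-/

/-- The 3-cochain `λ(α,ρ)` of a pair `(α, ρ)`:
`λ X Y Z = α X (ρ Y Z) + α Y (ρ Z X) + α Z (ρ X Y)
- ρ ⁅X,Y⁆ Z - ρ ⁅Y,Z⁆ X - ρ ⁅Z,X⁆ Y`. -/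
def lambdaCochain {𝕜 : Type*} [Field 𝕜] {h g : Type*} [LieRing h] [LieAlgebra 𝕜 h]
    [LieRing g] [LieAlgebra 𝕜 g] (α : g →ₗ[𝕜] LieDerivation 𝕜 h h)
    (ρ : g →ₗ[𝕜] g →ₗ[𝕜] h) (X Y Z : g) : h :=
  α X (ρ Y Z) + α Y (ρ Z X) + α Z (ρ X Y)
    - ρ ⁅X, Y⁆ Z - ρ ⁅Y, Z⁆ X - ρ ⁅Z, X⁆ Y

/-- The curvature equation, evaluated at a vector and solved for the action of a bracket. -/
lemma action_lie {𝕜 : Type*} [Field 𝕜] {h g : Type*} [LieRing h] [LieAlgebra 𝕜 h]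
    [LieRing g] [LieAlgebra 𝕜 g] (α : g →ₗ[𝕜] LieDerivation 𝕜 h h)
    (ρ : g →ₗ[𝕜] g →ₗ[𝕜] h)
    (h53 : ∀ X Y : g, LieDerivation.ad 𝕜 h (ρ X Y) = ⁅α X, α Y⁆ - α ⁅X, Y⁆) (X Y : g) (v : h) :
    α ⁅X, Y⁆ v = α X (α Y v) - α Y (α X v) - ⁅ρ X Y, v⁆ := by
  have e := congrArg (fun D : LieDerivation 𝕜 h h => D v) (h53 X Y)
  simp only [LieDerivation.ad_apply_apply, LieDerivation.sub_apply,
    LieDerivation.lie_apply] at e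
  rw [e]
  abel

lemma rho_jacobi {𝕜 : Type*} [Field 𝕜] {h g : Type*} [AddCommGroup h] [Module 𝕜 h]
    [LieRing g] [LieAlgebra 𝕜 g] (ρ : g →ₗ[𝕜] g →ₗ[𝕜] h) (X Y Z W : g) :
    ρ ⁅⁅X, Y⁆, Z⁆ W = ρ ⁅⁅X, Z⁆, Y⁆ W - ρ ⁅⁅Y, Z⁆, X⁆ W := by
  rw [← LinearMap.sub_apply, ← map_sub]
  congr 2
  rw [lie_lie, ← lie_skew X ⁅Y, Z⁆, ← lie_skew Y ⁅X, Z⁆]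
  abel

/-- Suppose `α : g → Der(h)` is `𝕜`-linear and `ρ : g × g → h` is
alternating bilinear with `ad_(ρ X Y) = ⁅α X, α Y⁆ - α ⁅X,Y⁆` for all `X, Y ∈ g`.
Then `λ = λ(α,ρ)` is a 3-cocycle: its Chevalley coboundary with respect to the
action `α` vanishes. -/
theorem statement11 {𝕜 : Type*} [Field 𝕜] {h g : Type*} [LieRing h] [LieAlgebra 𝕜 h]
    [LieRing g] [LieAlgebra 𝕜 g] (α : g →ₗ[𝕜] LieDerivation 𝕜 h h)
    (ρ : g →ₗ[𝕜] g →ₗ[𝕜] h) (halt : ∀ X : g, ρ X X = 0)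
    (h53 : ∀ X Y : g, LieDerivation.ad 𝕜 h (ρ X Y) = ⁅α X, α Y⁆ - α ⁅X, Y⁆) :
    ∀ X₀ X₁ X₂ X₃ : g,
      α X₀ (lambdaCochain α ρ X₁ X₂ X₃) - α X₁ (lambdaCochain α ρ X₀ X₂ X₃)
          + α X₂ (lambdaCochain α ρ X₀ X₁ X₃) - α X₃ (lambdaCochain α ρ X₀ X₁ X₂)
          - lambdaCochain α ρ ⁅X₀, X₁⁆ X₂ X₃ + lambdaCochain α ρ ⁅X₀, X₂⁆ X₁ X₃
          - lambdaCochain α ρ ⁅X₀, X₃⁆ X₁ X₂ - lambdaCochain α ρ ⁅X₁, X₂⁆ X₀ X₃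
          + lambdaCochain α ρ ⁅X₁, X₃⁆ X₀ X₂ - lambdaCochain α ρ ⁅X₂, X₃⁆ X₀ X₁ = 0 := by
  intro X₀ X₁ X₂ X₃
  have skew : ∀ X Y : g, ρ X Y = -ρ Y X := fun X Y =>
    eq_neg_of_add_eq_zero_left (by simpa [halt, add_comm] using halt (X + Y))
  -- Orient the brackets in `g`: increasing indices, inner brackets on the left. The pairs
  -- `(X₀, X₁)`, `(X₁, X₂)`, `(X₂, X₃)` already occur in increasing order.
  have s20 := (lie_skew X₂ X₀).symm
  have s30 := (lie_skew X₃ X₀).symm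
  have s31 := (lie_skew X₃ X₁).symm
  have sl : ∀ X Y Z : g, ⁅X, ⁅Y, Z⁆⁆ = -⁅⁅Y, Z⁆, X⁆ := fun X Y Z => (lie_skew _ _).symm
  simp only [lambdaCochain, s20, s30, s31, sl, map_neg, map_add, map_sub,
    LinearMap.neg_apply, action_lie α ρ h53]
  -- Orient the arguments of `ρ` in the same way.
  simp only [skew X₂ X₀, skew X₃ X₀, skew X₃ X₁,
    skew X₂ ⁅X₀, X₃⁆,
    skew X₃ ⁅X₀, X₁⁆, skew X₃ ⁅X₀, X₂⁆,
    skew ⁅X₂, X₃⁆ ⁅X₀, X₁⁆, skew ⁅X₁, X₃⁆ ⁅X₀, X₂⁆, skew ⁅X₁, X₂⁆ ⁅X₀, X₃⁆,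
    skew X₁ ⁅X₂, X₃⁆, skew X₂ ⁅X₁, X₃⁆, skew X₃ ⁅X₁, X₂⁆, map_neg]
  rw [rho_jacobi ρ X₀ X₁ X₂, rho_jacobi ρ X₀ X₁ X₃, rho_jacobi ρ X₀ X₂ X₃,
    rho_jacobi ρ X₁ X₂ X₃,
    ← lie_skew (ρ X₂ X₃) (ρ X₀ X₁), ← lie_skew (ρ X₁ X₃) (ρ X₀ X₂),
    ← lie_skew (ρ X₁ X₂) (ρ X₀ X₃)]
  abel
end

section
/- Suppose α : g → Der(h) is 𝕜-linear and ρ : g × g → h is alternating bilinear with ad_{ρ(X,Y)} = ⁅α_X, α_Y⁆ − α_{⁅X,Y⁆} for all X, Y. Given a 𝕜-linear map b : g → h, set α'_X = α_X + ad_{b(X)} and ρ'(X,Y) = ρ(X,Y) + α_X(b(Y)) − α_Y(b(X)) − b(⁅X,Y⁆) + ⁅b(X), b(Y)⁆. Then ad_{ρ'(X,Y)} = ⁅α'_X, α'_Y⁆ − α'_{⁅X,Y⁆} for all X, Y, and the associated 3-cochains coincide exactly: λ(α',ρ')(X,Y,Z) = λ(α,ρ)(X,Y,Z) for all X, Y,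 Z ∈ g. -/
/-!
Evaluated at `H`, the curvature hypothesis reads
`⁅ρ X Y, H⁆ = α X (α Y H) - α Y (α X H) - α ⁅X, Y⁆ H`.
The first claim follows from this and the Leibniz and Jacobi identities in `h`.
For the second, the change of the cochain under `b` splits into four groups that vanish separately:
the terms `⁅b X, ρ Y Z⁆`, which the curvature identity at `H = b X` cancels against the terms
`α Y (α Z (b X))` and `α ⁅Y, Z⁆ (b X)`; the terms `⁅b X, α Y (b Z)⁆`, by the Leibniz rule;
the terms `b ⁅⁅X, Y⁆, Z⁆`, by the Jacobi identity in `g`; and the terms `⁅b X, ⁅b Y, b Z⁆⁆`, by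
the Jacobi identity in `h`. The terms `α X (b ⁅Y, Z⁆)` and `⁅b X, b ⁅Y, Z⁆⁆` cancel directly.
-/

/-- The 3-cochain `λ(α,ρ)` of a pair `(α, ρ)` (maps taken unbundled):
`λ X Y Z = α X (ρ Y Z) + α Y (ρ Z X) + α Z (ρ X Y)
- ρ ⁅X,Y⁆ Z - ρ ⁅Y,Z⁆ X - ρ ⁅Z,X⁆ Y`. -/
def lambdaCochainF {𝕜 : Type*} [Field 𝕜] {h g : Type*} [LieRing h] [LieAlgebra 𝕜 h]
    [LieRing g] [LieAlgebra 𝕜 g] (α : g → LieDerivation 𝕜 h h)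
    (ρ : g → g → h) (X Y Z : g) : h :=
  α X (ρ Y Z) + α Y (ρ Z X) + α Z (ρ X Y)
    - ρ ⁅X, Y⁆ Z - ρ ⁅Y, Z⁆ X - ρ ⁅Z, X⁆ Y

/-- Suppose `α : g → Der(h)` is `𝕜`-linear and `ρ : g × g → h` is
alternating bilinear with `ad_(ρ X Y) = ⁅α X, α Y⁆ - α ⁅X,Y⁆`.  Given a `𝕜`-linear
map `b : g → h`, set `α'_X = α_X + ad_(b X)` and
`ρ' X Y = ρ X Y + α X (b Y) - α Y (b X) - b ⁅X,Y⁆ + ⁅b X, b Y⁆`.  Then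
`ad_(ρ' X Y) = ⁅α' X, α' Y⁆ - α' ⁅X,Y⁆` for all `X, Y`, and the associated
3-cochains coincide exactly: `λ(α',ρ') = λ(α,ρ)`. -/
theorem statement12 {𝕜 : Type*} [Field 𝕜] {h g : Type*} [LieRing h] [LieAlgebra 𝕜 h]
    [LieRing g] [LieAlgebra 𝕜 g] (α : g →ₗ[𝕜] LieDerivation 𝕜 h h)
    (ρ : g →ₗ[𝕜] g →ₗ[𝕜] h) (halt : ∀ X : g, ρ X X = 0)
    (h53 : ∀ X Y : g, LieDerivation.ad 𝕜 h (ρ X Y) = ⁅α X, α Y⁆ - α ⁅X, Y⁆)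
    (b : g →ₗ[𝕜] h) :
    let α' : g → LieDerivation 𝕜 h h := fun X => α X + LieDerivation.ad 𝕜 h (b X)
    let ρ' : g → g → h := fun X Y =>
      ρ X Y + α X (b Y) - α Y (b X) - b ⁅X, Y⁆ + ⁅b X, b Y⁆
    (∀ X Y : g, LieDerivation.ad 𝕜 h (ρ' X Y) = ⁅α' X, α' Y⁆ - α' ⁅X, Y⁆) ∧
    (∀ X Y Z : g,
      lambdaCochainF α' ρ' X Y Z
        = lambdaCochainF (fun X => α X) (fun X Y => ρ X Y) X Y Z) := by
  intro α' ρ'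
  have hc : ∀ (X Y : g) (H : h), ⁅ρ X Y, H⁆ = α X (α Y H) - α Y (α X H) - α ⁅X, Y⁆ H := by
    intro X Y H
    have := congrArg (fun D : LieDerivation 𝕜 h h => D H) (h53 X Y)
    simpa [LieDerivation.commutator_apply] using this
  refine ⟨fun X Y => ?_, fun X Y Z => ?_⟩
  · ext H
    simp only [α', ρ', LieDerivation.ad_apply_apply, LieDerivation.commutator_apply,
      LieDerivation.add_apply, LieDerivation.sub_apply, map_add, LieDerivation.apply_lie_eq_add,
      add_lie, sub_lie, lie_add, hc, lie_lie]
    abel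
  · have hcurv : ∀ X Y Z : g,
        ⁅b Z, ρ X Y⁆ = -(α X (α Y (b Z)) - α Y (α X (b Z)) - α ⁅X, Y⁆ (b Z)) := by
      intro X Y Z
      rw [← hc, lie_skew]
    have hg : b ⁅⁅X, Y⁆, Z⁆ = -b ⁅⁅Y, Z⁆, X⁆ - b ⁅⁅Z, X⁆, Y⁆ := by
      rw [← map_neg, ← map_sub, ← lie_skew ⁅X, Y⁆ Z, ← lie_skew ⁅Y, Z⁆ X, ← lie_skew ⁅Z, X⁆ Y]
      congr 1
      rw [eq_comm, ← sub_eq_zero, ← lie_jacobi X Y Z]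
      abel
    have hh : ⁅b X, ⁅b Y, b Z⁆⁆ = -⁅b Y, ⁅b Z, b X⁆⁆ - ⁅b Z, ⁅b X, b Y⁆⁆ := by
      rw [← sub_eq_zero, ← lie_jacobi (b X) (b Y) (b Z)]
      abel
    have hs : ∀ U V W : g, α U ⁅b V, b W⁆ = ⁅b V, α U (b W)⁆ - ⁅b W, α U (b V)⁆ := by
      intro U V W
      rw [LieDerivation.apply_lie_eq_add, ← lie_skew (α U (b V)), sub_eq_add_neg]
    have ht : ∀ U V W : g, ⁅b ⁅U, V⁆, b W⁆ = -⁅b W, b ⁅U, V⁆⁆ :=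
      fun U V W => (lie_skew _ _).symm
    simp only [lambdaCochainF, α', ρ', LieDerivation.ad_apply_apply, LieDerivation.add_apply,
      map_add, map_sub, hcurv, hg, hh, hs, ht]
    abel
end

section
/- Suppose α : g → Der(h) is 𝕜-linear and ρ, ρ' : g × g → h are alternating bilinear maps both satisfying ad_{ρ(X,Y)} = ad_{ρ'(X,Y)} = ⁅α_X, α_Y⁆ − α_{⁅X,Y⁆} for all X, Y ∈ g. Then μ := ρ − ρ' takes values in the center Z(h), and λ(α,ρ)(X,Y,Z) − λ(α,ρ')(X,Y,Z) = α_X(μ(Y,Z)) + α_Y(μ(Z,X)) + α_Z(μ(X,Y)) − μ(⁅X,Y⁆,Z) − μ(⁅Y,Z⁆,X) − μ(⁅Z,X⁆,Y) for all X, Y, Z ∈ g. -/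
/-- Suppose `α : g → Der(h)` is `𝕜`-linear and `ρ, ρ' : g × g → h` are
alternating bilinear maps both satisfying
`ad_(ρ X Y) = ad_(ρ' X Y) = ⁅α X, α Y⁆ - α ⁅X,Y⁆` for all `X, Y ∈ g`.  Then
`μ := ρ - ρ'` takes values in the center `Z(h)`, and
`λ(α,ρ) - λ(α,ρ') = δ_α μ` (the Chevalley coboundary of `μ`). -/
theorem statement13 {𝕜 : Type*} [Field 𝕜] {h g : Type*} [LieRing h] [LieAlgebra 𝕜 h]
    [LieRing g] [LieAlgebra 𝕜 g] (α : g →ₗ[𝕜] LieDerivation 𝕜 h h)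
    (ρ ρ' : g →ₗ[𝕜] g →ₗ[𝕜] h)
    (halt : ∀ X : g, ρ X X = 0) (halt' : ∀ X : g, ρ' X X = 0)
    (h53 : ∀ X Y : g, LieDerivation.ad 𝕜 h (ρ X Y) = ⁅α X, α Y⁆ - α ⁅X, Y⁆)
    (h53' : ∀ X Y : g, LieDerivation.ad 𝕜 h (ρ' X Y) = ⁅α X, α Y⁆ - α ⁅X, Y⁆) :
    let μ : g → g → h := fun X Y => ρ X Y - ρ' X Y
    (∀ X Y : g, μ X Y ∈ LieAlgebra.center 𝕜 h) ∧
    (∀ X Y Z : g,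
      lambdaCochain α ρ X Y Z - lambdaCochain α ρ' X Y Z
        = α X (μ Y Z) + α Y (μ Z X) + α Z (μ X Y)
          - μ ⁅X, Y⁆ Z - μ ⁅Y, Z⁆ X - μ ⁅Z, X⁆ Y) := by
  intro μ
  refine ⟨fun X Y => ?_, fun X Y Z => ?_⟩
  · -- The center is the kernel of `ad`, and `ad` takes the same value on `ρ X Y` and `ρ' X Y`.
    rw [← LieDerivation.ad_ker_eq_center, LieHom.mem_ker]
    simp only [μ, map_sub, h53, h53', sub_self]
  · -- The cochain is additive in `ρ` because each `α X` is.
    simp only [lambdaCochain, μ, map_sub]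
    abel
end

section
/- Suppose (α, ρ) and (α, ρ') are two data with the same α, both satisfying conditions (5.3) and (5.4). Then μ := ρ − ρ' takes values in the center Z(h) and is a 2-cocycle: α_X(μ(Y,Z)) + α_Y(μ(Z,X)) + α_Z(μ(X,Y)) − μ(⁅X,Y⁆,Z) − μ(⁅Y,Z⁆,X) − μ(⁅Z,X⁆,Y) = 0 for all X, Y, Z ∈ g. -/
/-- Suppose `(α, ρ)` and `(α, ρ')` are two data with the same `α`,
both satisfying conditions (5.3) and (5.4).  Then `μ := ρ - ρ'` takes values in the
center `Z(h)` and is a 2-cocycle: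
`α X (μ Y Z) + α Y (μ Z X) + α Z (μ X Y)
- μ ⁅X,Y⁆ Z - μ ⁅Y,Z⁆ X - μ ⁅Z,X⁆ Y = 0` for all `X, Y, Z ∈ g`. -/
theorem statement15 {𝕜 : Type*} [Field 𝕜] {h g : Type*} [LieRing h] [LieAlgebra 𝕜 h]
    [LieRing g] [LieAlgebra 𝕜 g] (α : g →ₗ[𝕜] LieDerivation 𝕜 h h)
    (ρ ρ' : g →ₗ[𝕜] g →ₗ[𝕜] h)
    (halt : ∀ X : g, ρ X X = 0) (halt' : ∀ X : g, ρ' X X = 0)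
    (h53 : ∀ X Y : g, ⁅α X, α Y⁆ - α ⁅X, Y⁆ = LieDerivation.ad 𝕜 h (ρ X Y))
    (h53' : ∀ X Y : g, ⁅α X, α Y⁆ - α ⁅X, Y⁆ = LieDerivation.ad 𝕜 h (ρ' X Y))
    (h54 : ∀ X Y Z : g,
      α X (ρ Y Z) + α Y (ρ Z X) + α Z (ρ X Y)
        - ρ ⁅X, Y⁆ Z - ρ ⁅Y, Z⁆ X - ρ ⁅Z, X⁆ Y = 0)
    (h54' : ∀ X Y Z : g,
      α X (ρ' Y Z) + α Y (ρ' Z X) + α Z (ρ' X Y)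
        - ρ' ⁅X, Y⁆ Z - ρ' ⁅Y, Z⁆ X - ρ' ⁅Z, X⁆ Y = 0) :
    let μ : g → g → h := fun X Y => ρ X Y - ρ' X Y
    (∀ X Y : g, μ X Y ∈ LieAlgebra.center 𝕜 h) ∧
    (∀ X Y Z : g,
      α X (μ Y Z) + α Y (μ Z X) + α Z (μ X Y)
        - μ ⁅X, Y⁆ Z - μ ⁅Y, Z⁆ X - μ ⁅Z, X⁆ Y = 0) := by
  intro μ
  refine ⟨fun X Y => ?_, fun X Y Z => ?_⟩
  -- The center is the kernel of `ad`, and both values have the same `ad`.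
  · rw [← LieDerivation.ad_ker_eq_center 𝕜 h, LieHom.mem_ker, map_sub, ← h53, ← h53', sub_self]
  -- The cocycle expression is additive in the bilinear map.
  · have e := congrArg₂ (· - ·) (h54 X Y Z) (h54' X Y Z)
    simp only [sub_zero] at e
    simp only [μ, map_sub]
    rw [← e]
    abel
end

section
/- Let h be an abelian Lie algebra, α : g → End(h) a homomorphism of Lie algebras (so h is a g-module), and let ρ, ρ' : g × g → h be alternating bilinear maps each satisfying the 2-cocycle condition α_X(ρ(Y,Z)) + α_Y(ρ(Z,X)) + α_Z(ρ(X,Y)) − ρ(⁅X,Y⁆,Z) − ρ(⁅Y,Z⁆,X) − ρ(⁅Z,X⁆,Y) = 0 (and likewise for ρ'). Then there exists an isomorphism of Lie algebras ψ : e(α,ρ) → e(α,ρ') with ψ(H,0) = (H,0) for all H ∈ h and pr₂ ∘ ψ = pr₂ if and only if there is a 𝕜-linear map b : g → h with ρ'(X,Y) − ρ(X,Y) = α_X(b(Y)) − α_Y(b(X)) − b(⁅X,Y⁆) for all X, Y ∈ g, i.e. iff ρ and ρ' differ by a Chevalley coboundary. -/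
/-!
The linear automorphisms `ψ` of `h × g` that fix `h` pointwise and commute with the projection
to `g` are exactly the shears `(H, X) ↦ (H - b X, X)` with `b : g → h` linear. Comparing the
`h`-components of `ψ ⁅p, q⁆` and `⁅ψ p, ψ q⁆`, such a shear intertwines the brackets of `e(α,ρ)`
and `e(α,ρ')` iff `ρ' X Y - ρ X Y = α X (b Y) - α Y (b X) - b ⁅X, Y⁆`.
-/

/-- The bracket on `e(α,ρ) = h × g` for an abelian kernel `h`:
`⁅(H₁,X₁),(H₂,X₂)⁆ = (α X₁ H₂ - α X₂ H₁ + ρ X₁ X₂, ⁅X₁,X₂⁆)`. -/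
def abelExtBracket {𝕜 : Type*} [Field 𝕜] {h g : Type*} [LieRing h] [LieAlgebra 𝕜 h]
    [LieRing g] [LieAlgebra 𝕜 g] (α : g →ₗ[𝕜] LieDerivation 𝕜 h h)
    (ρ : g →ₗ[𝕜] g →ₗ[𝕜] h) (p q : h × g) : h × g :=
  (α p.2 q.1 - α q.2 p.1 + ρ p.2 q.2, ⁅p.2, q.2⁆)

/-- Let `h` be an abelian Lie algebra (so that every `𝕜`-linear
endomorphism of `h` is a derivation and `Der(h) = gl(h)`), `α : g → gl(h)` a
homomorphism of Lie algebras (so `h` is a `g`-module), and let `ρ, ρ' : g × g → h`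
be alternating bilinear 2-cocycles.  Then there exists an isomorphism of Lie
algebras `ψ : e(α,ρ) → e(α,ρ')` with `ψ (H,0) = (H,0)` and `pr₂ ∘ ψ = pr₂` if and
only if there is a `𝕜`-linear map `b : g → h` with
`ρ' X Y - ρ X Y = α X (b Y) - α Y (b X) - b ⁅X,Y⁆` for all `X, Y ∈ g`, i.e. iff
`ρ` and `ρ'` differ by a Chevalley coboundary. -/
theorem statement16 {𝕜 : Type*} [Field 𝕜] {h g : Type*} [LieRing h] [LieAlgebra 𝕜 h]
    [LieRing g] [LieAlgebra 𝕜 g] [IsLieAbelian h]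
    (α : g →ₗ[𝕜] LieDerivation 𝕜 h h)
    (hα : ∀ X Y : g, α ⁅X, Y⁆ = ⁅α X, α Y⁆)
    (ρ ρ' : g →ₗ[𝕜] g →ₗ[𝕜] h)
    (halt : ∀ X : g, ρ X X = 0) (halt' : ∀ X : g, ρ' X X = 0)
    (hcoc : ∀ X Y Z : g,
      α X (ρ Y Z) + α Y (ρ Z X) + α Z (ρ X Y)
        - ρ ⁅X, Y⁆ Z - ρ ⁅Y, Z⁆ X - ρ ⁅Z, X⁆ Y = 0)
    (hcoc' : ∀ X Y Z : g,
      α X (ρ' Y Z) + α Y (ρ' Z X) + α Z (ρ' X Y)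
        - ρ' ⁅X, Y⁆ Z - ρ' ⁅Y, Z⁆ X - ρ' ⁅Z, X⁆ Y = 0) :
    (∃ ψ : (h × g) ≃ₗ[𝕜] (h × g),
      (∀ p q : h × g, ψ (abelExtBracket α ρ p q) = abelExtBracket α ρ' (ψ p) (ψ q)) ∧
      (∀ H : h, ψ (H, 0) = (H, 0)) ∧
      (∀ p : h × g, (ψ p).2 = p.2)) ↔
    (∃ b : g →ₗ[𝕜] h,
      ∀ X Y : g, ρ' X Y - ρ X Y = α X (b Y) - α Y (b X) - b ⁅X, Y⁆) := by
  constructor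
  · rintro ⟨ψ, hψ, hfix, hpr⟩
    -- `-b` is the `h`-component of `ψ` on the complement `0 × g`.
    refine ⟨-(LinearMap.fst 𝕜 h g ∘ₗ ψ.toLinearMap ∘ₗ LinearMap.inr 𝕜 h g), fun X Y => ?_⟩
    have hshear : ∀ (H : h) (X : g), (ψ (H, X)).1 = H + (ψ (0, X)).1 := by
      intro H X
      have hsplit : ((H, X) : h × g) = (H, 0) + (0, X) := by simp
      rw [hsplit, map_add, hfix]
      rfl
    have hfst := congrArg Prod.fst (hψ (0, X) (0, Y))
    simp only [abelExtBracket, hpr, map_zero, sub_zero, zero_add] at hfst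
    rw [hshear] at hfst
    simp only [LinearMap.neg_apply, LinearMap.comp_apply, LinearMap.inr_apply,
      LinearMap.fst_apply, LinearEquiv.coe_coe, map_neg]
    linear_combination (norm := module) -hfst
  · rintro ⟨b, hb⟩
    let ψ : (h × g) ≃ₗ[𝕜] (h × g) :=
      { toFun := fun p => (p.1 - b p.2, p.2)
        invFun := fun p => (p.1 + b p.2, p.2)
        map_add' := fun p q => by
          ext
          · simp only [Prod.fst_add, Prod.snd_add, map_add]
            abel
          · rfl
        map_smul' := fun c p => by
          ext
          · simp [smul_sub]
          · rfl
        left_inv := fun p => by simp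
        right_inv := fun p => by simp }
    refine ⟨ψ, fun p q => ?_, fun H => ?_, fun p => rfl⟩
    · change (α p.2 q.1 - α q.2 p.1 + ρ p.2 q.2 - b ⁅p.2, q.2⁆, ⁅p.2, q.2⁆) =
        (α p.2 (q.1 - b q.2) - α q.2 (p.1 - b p.2) + ρ' p.2 q.2, ⁅p.2, q.2⁆)
      rw [eq_add_of_sub_eq (hb p.2 q.2), map_sub, map_sub]
      congr 1
      abel
    · change (H - b 0, (0 : g)) = (H, 0)
      rw [map_zero, sub_zero]
end

section
/- Let h have trivial center and let α : g → Der(h) be a 𝕜-linear map such that ⁅α_X, α_Y⁆ − α_{⁅X,Y⁆} is an inner derivation for all X, Y ∈ g. Then there exists a Lie algebra e over 𝕜, an injective Lie algebra homomorphism i : h → e whose image is a Lie ideal, and a surjective Lie algebra homomorphism q : e → g with kernel i(h), together with a 𝕜-linear section s : g → e of q such that ⁅s(X), i(H)⁆ = i(α_X(H)) for all X ∈ g and H ∈ h; i.e. there exists a Lie algebra extension of g by h whose induced action of g on h is the given α. -/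
/-!
The extension is realised as the pullback of `Der(h) → Der(h) / ad(h)` along the map
`g → Der(h) / ad(h)` induced by `α`: inside the product Lie algebra `Der(h) × g` take all
pairs `(D, X)` with `D - α X` inner. Since inner derivations form an ideal of `Der(h)` and
`⁅α X, α Y⁆ - α ⁅X, Y⁆` is inner, these pairs form a Lie subalgebra. The kernel of the
projection to `g` is the algebra of inner derivations, which is `h` itself because the center
of `h` is trivial, and `X ↦ (α X, X)` is the required section. The Jacobi identity is
inherited from `Der(h) × g`, so no cocycle condition has to be checked.
-/

universe u v

/-- A Lie algebra extension `0 → h → E → g → 0` together with a `𝕜`-linear section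
`s` of the projection realizing a prescribed action `α : g → Der(h)` of `g` on the
kernel `h`: `⁅s X, i H⁆ = i (α X H)`. -/
structure LieExtensionWithAction (𝕜 : Type*) [Field 𝕜] (h : Type u) (g : Type v)
    [LieRing h] [LieAlgebra 𝕜 h] [LieRing g] [LieAlgebra 𝕜 g]
    (α : g →ₗ[𝕜] LieDerivation 𝕜 h h) where
  /-- the middle Lie algebra of the extension -/
  E : Type (max u v)
  [instLieRing : LieRing E]
  [instLieAlgebra : LieAlgebra 𝕜 E]
  /-- the inclusion of the kernel -/
  i : h →ₗ⁅𝕜⁆ E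
  i_injective : Function.Injective i
  /-- the image of `i` is a Lie ideal of `E` -/
  range_ideal : ∀ (x : E) (H : h), ∃ K : h, ⁅x, i H⁆ = i K
  /-- the projection onto `g` -/
  q : E →ₗ⁅𝕜⁆ g
  q_surjective : Function.Surjective q
  /-- the kernel of `q` is exactly the image of `i` -/
  ker_eq_range : ∀ x : E, q x = 0 ↔ ∃ H : h, i H = x
  /-- a `𝕜`-linear section of `q` -/
  s : g →ₗ[𝕜] E
  sect : ∀ X : g, q (s X) = X
  /-- the induced action of `g` on `h` is the given `α` -/
  compat : ∀ (X : g) (H : h), ⁅s X, i H⁆ = i (α X H)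

section

variable {𝕜 : Type*} [Field 𝕜] {h : Type u} {g : Type v}
  [LieRing h] [LieAlgebra 𝕜 h] [LieRing g] [LieAlgebra 𝕜 g]

/-- The Lie subalgebra of `Der(h) × g` of all pairs `(D, X)` such that `D` and `α X` agree
modulo inner derivations. -/
def outerPullback (α : g →ₗ[𝕜] LieDerivation 𝕜 h h)
    (hinner : ∀ X Y : g, ∃ H : h, ⁅α X, α Y⁆ - α ⁅X, Y⁆ = LieDerivation.ad 𝕜 h H) :
    LieSubalgebra 𝕜 (LieDerivation 𝕜 h h × g) where
  carrier := {p | ∃ H : h, p.1 = α p.2 + LieDerivation.ad 𝕜 h H}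
  zero_mem' := ⟨0, by simp⟩
  add_mem' := by
    rintro ⟨D, X⟩ ⟨D', Y⟩ ⟨H, hH⟩ ⟨K, hK⟩
    refine ⟨H + K, ?_⟩
    simp only at hH hK
    simp only [Prod.mk_add_mk, hH, hK, map_add]
    abel
  smul_mem' := by
    rintro c ⟨D, X⟩ ⟨H, hH⟩
    refine ⟨c • H, ?_⟩
    simp only at hH
    simp [hH]
  lie_mem' := by
    rintro ⟨D, X⟩ ⟨D', Y⟩ ⟨H, hH⟩ ⟨K, hK⟩
    obtain ⟨L, hL⟩ := hinner X Y
    simp only at hH hK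
    -- `⁅α X + ad H, D'⁆ = ⁅α X, α Y⁆ + ⁅α X, ad K⁆ - ⁅D', ad H⁆`
    refine ⟨L + α X K - D' H, ?_⟩
    have hD : ⁅LieDerivation.ad 𝕜 h H, D'⁆ = -LieDerivation.ad 𝕜 h (D' H) := by
      rw [← lie_skew, LieDerivation.lie_der_ad_eq_ad_der]
    have hXD : ⁅α X, D'⁆ = ⁅α X, α Y⁆ + LieDerivation.ad 𝕜 h (α X K) := by
      rw [hK, lie_add, LieDerivation.lie_der_ad_eq_ad_der]
    change ⁅D, D'⁆ = α ⁅X, Y⁆ + _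
    rw [hH, add_lie, hD, hXD, map_sub, map_add, ← hL]
    abel

end

/-- Let `h` have trivial center and let `α : g → Der(h)` be a
`𝕜`-linear map such that `⁅α X, α Y⁆ - α ⁅X,Y⁆` is an inner derivation for all
`X, Y ∈ g`.  Then there exists a Lie algebra extension of `g` by `h` whose induced
action of `g` on `h` is the given `α`. -/
theorem statement19 {𝕜 : Type*} [Field 𝕜] {h : Type u} {g : Type v}
    [LieRing h] [LieAlgebra 𝕜 h] [LieRing g] [LieAlgebra 𝕜 g]
    (hZ : ∀ H : h, (∀ K : h, ⁅H, K⁆ = 0) → H = 0)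
    (α : g →ₗ[𝕜] LieDerivation 𝕜 h h)
    (hinner : ∀ X Y : g, ∃ H : h, ⁅α X, α Y⁆ - α ⁅X, Y⁆ = LieDerivation.ad 𝕜 h H) :
    Nonempty (LieExtensionWithAction 𝕜 h g α) := by
  let i : h →ₗ⁅𝕜⁆ outerPullback α hinner :=
    { toFun := fun H => ⟨(LieDerivation.ad 𝕜 h H, 0), H, by simp⟩
      map_add' := fun H K => Subtype.ext (by simp)
      map_smul' := fun c H => Subtype.ext (by simp)
      map_lie' := fun {H K} => Subtype.ext (by simp) }
  let q : outerPullback α hinner →ₗ⁅𝕜⁆ g :=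
    (LieHom.snd 𝕜 (LieDerivation 𝕜 h h) g).comp (outerPullback α hinner).incl
  let s : g →ₗ[𝕜] outerPullback α hinner :=
    { toFun := fun X => ⟨(α X, X), 0, by simp⟩
      map_add' := fun X Y => Subtype.ext (by simp)
      map_smul' := fun c X => Subtype.ext (by simp) }
  exact ⟨{
    E := outerPullback α hinner
    i := i
    i_injective := by
      rw [injective_iff_map_eq_zero]
      intro H hH
      refine hZ H fun K => ?_
      have hadH : LieDerivation.ad 𝕜 h H = 0 := congrArg (fun e => e.1.1) hH
      simpa using congrArg (fun D : LieDerivation 𝕜 h h => D K) hadH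
    range_ideal := fun x H => ⟨x.1.1 H, Subtype.ext
      (Prod.ext (LieDerivation.lie_der_ad_eq_ad_der x.1.1 H) (lie_zero x.1.2))⟩
    q := q
    q_surjective := fun X => ⟨s X, rfl⟩
    ker_eq_range := by
      rintro ⟨⟨D, X⟩, H, hH⟩
      constructor
      · intro hX
        change X = 0 at hX
        subst hX
        exact ⟨H, Subtype.ext (Prod.ext (by simpa [i] using hH.symm) rfl)⟩
      · rintro ⟨K, hK⟩
        exact (congrArg (fun e => e.1.2) hK).symm
    s := s
    sect := fun X => rfl
    compat := fun X H => Subtype.ext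
      (Prod.ext (LieDerivation.lie_der_ad_eq_ad_der (α X) H) (lie_zero X)) }⟩
end
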